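/- Let d be an even positive integer, let 0 < ε ≤ 1/8, and let N be a positive integer. Let Θ be the diagonal d×d matrix with k-th diagonal entry (−1)^k (k = 1, …, d) and ρ0 = (I_d + 8εΘ)/d. Draw U_1, …, U_N independently according to the Haar probability measure on U(d). Then the probability of the event (1/N²) Σ_{i=1}^N Σ_{j=1}^N Re Tr[Θ U_iᴴ U_j ρ0 U_jᴴ U_i] > 3ε is at most 8/(3N). -/

import Mathlib

open Matrix Finset MeasureTheory
open scoped ComplexOrder

/-- The diagonal matrix `Θ` whose `k`-th diagonal entry is `(−1)^k`, `k = 1, …, d`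
(index `k : Fin d` corresponds to the `(k+1)`-st entry). -/
noncomputable def Theta (d : ℕ) : Matrix (Fin d) (Fin d) ℂ :=
  Matrix.diagonal fun k => (-1 : ℂ) ^ ((k : ℕ) + 1)

/-- The state `ρ0 = (I_d + 8 ε Θ)/d`. -/
noncomputable def rho0 (d : ℕ) (ε : ℝ) : Matrix (Fin d) (Fin d) ℂ :=
  ((d : ℂ))⁻¹ • (1 + ((8 * ε : ℝ) : ℂ) • Theta d)

/-!
Averaging `U * A * Uᴴ` over a left-invariant probability measure gives a matrix that commutes with
every unitary. Unitaries span all matrices, so this average is the scalar `tr A / d`, which vanishes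
for traceless `A`. Hence for i.i.d. Haar unitaries `Uᵢ` the matrices `Uᵢ * A * Uᵢᴴ` are i.i.d. and
centered, and their sum `S` satisfies `𝔼 tr S² = N * tr A²`, as for the variance of a sum of
independent real variables. Up to a positive factor the double sum of cross terms is `tr S²`: the
identity part of `ρ0` contributes nothing, since `S` is traceless. As `S` is Hermitian, `tr S² ≥ 0`,
and Markov's inequality finishes the proof.
-/

open scoped Matrix.Norms.L2Operator
open Unitary (conjStarAlgAut)

section Probability

variable {Ω R ι : Type*} [MeasurableSpace Ω] {μ : Measure Ω}

theorem measure_lt_le_ofReal_integral_div [IsFiniteMeasure μ] {f : Ω → ℝ} (hf0 : 0 ≤ f)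
    (hf : Integrable f μ) {t : ℝ} (ht : 0 < t) :
    μ {ω | t < f ω} ≤ ENNReal.ofReal ((∫ ω, f ω ∂μ) / t) := by
  have markov : μ.real {ω | t ≤ f ω} ≤ (∫ ω, f ω ∂μ) / t := by
    rw [le_div_iff₀' ht]
    exact mul_meas_ge_le_integral_of_nonneg (.of_forall hf0) hf t
  calc μ {ω | t < f ω} ≤ μ {ω | t ≤ f ω} := measure_mono fun ω (h : t < f ω) ↦ h.le
    _ = ENNReal.ofReal (μ.real {ω | t ≤ f ω}) := (ofReal_measureReal (measure_ne_top _ _)).symm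
    _ ≤ ENNReal.ofReal ((∫ ω, f ω ∂μ) / t) := ENNReal.ofReal_le_ofReal markov

variable [Fintype ι] [IsProbabilityMeasure μ] [NormedRing R] {X Y : Ω → R}

theorem memLp_pi_eval {p : ENNReal} (hX : MemLp X p μ) (i : ι) :
    MemLp (fun ω ↦ X (ω i)) p (Measure.pi fun _ : ι ↦ μ) :=
  hX.comp_measurePreserving (measurePreserving_eval (fun _ ↦ μ) i)

theorem integrable_pi_sum_eval_sq (hX : MemLp X 2 μ) :
    Integrable (fun ω ↦ (∑ i, X (ω i)) ^ 2) (Measure.pi fun _ : ι ↦ μ) := by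
  have hsum : MemLp (fun ω ↦ ∑ i, X (ω i)) 2 (Measure.pi fun _ : ι ↦ μ) :=
    memLp_finsetSum _ fun i _ ↦ memLp_pi_eval hX i
  simp only [sq]
  exact hsum.integrable_mul hsum

variable [NormedAlgebra ℝ R] [CompleteSpace R]

theorem integral_pi_eval_mul_eval {i j : ι} (hij : i ≠ j)
    (hX : Integrable X μ) (hY : Integrable Y μ) :
    ∫ ω, X (ω i) * Y (ω j) ∂Measure.pi (fun _ : ι ↦ μ) = (∫ x, X x ∂μ) * ∫ x, Y x ∂μ := by
  have hmap (k : ι) : (Measure.pi fun _ : ι ↦ μ).map (fun ω ↦ ω k) = μ :=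
    (measurePreserving_eval (fun _ ↦ μ) k).map_eq
  have hindep : ProbabilityTheory.IndepFun (fun ω ↦ ω i) (fun ω ↦ ω j)
      (Measure.pi fun _ : ι ↦ μ) :=
    (ProbabilityTheory.iIndepFun_pi (X := fun _ ↦ id) fun _ ↦ aemeasurable_id).indepFun hij
  have hprod := hindep.integral_bilin_comp_comp (f := X) (g := Y)
    (measurable_pi_apply i).aemeasurable (measurable_pi_apply j).aemeasurable
    (by rwa [hmap]) (by rwa [hmap]) (ContinuousLinearMap.mul ℝ R)
  rwa [integral_comp_eval hX.1, integral_comp_eval hY.1] at hprod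

theorem integral_pi_sum_eval_sq (hX : MemLp X 2 μ) (hX0 : ∫ x, X x ∂μ = 0) :
    ∫ ω, (∑ i, X (ω i)) ^ 2 ∂Measure.pi (fun _ : ι ↦ μ) =
      Fintype.card ι • ∫ x, X x ^ 2 ∂μ := by
  classical
  have hint (i j : ι) : Integrable (fun ω ↦ X (ω i) * X (ω j)) (Measure.pi fun _ : ι ↦ μ) :=
    (memLp_pi_eval hX i).integrable_mul (memLp_pi_eval hX j)
  have hXint : Integrable X μ := hX.integrable one_le_two
  have hpair (i j : ι) : ∫ ω, X (ω i) * X (ω j) ∂Measure.pi (fun _ : ι ↦ μ) =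
      if i = j then ∫ x, X x ^ 2 ∂μ else 0 := by
    split_ifs with hij
    · subst hij
      simp only [← sq]
      exact integral_comp_eval (μ := fun _ ↦ μ) (f := fun x ↦ X x ^ 2) (hX.1.pow 2)
    · rw [integral_pi_eval_mul_eval hij hXint hXint, hX0, mul_zero]
  simp only [sq (Finset.sum _ _), Finset.sum_mul_sum]
  rw [integral_finsetSum _ fun i _ ↦ integrable_finsetSum _ fun j _ ↦ hint i j]
  simp only [integral_finsetSum _ fun j _ ↦ hint _ j, hpair, Finset.sum_ite_eq, Finset.mem_univ,
    if_true, Finset.sum_const, Finset.card_univ]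

end Probability

section HaarTwirl

theorem continuous_conjStarAlgAut {R : Type*} [Ring R] [StarRing R] [Algebra ℂ R]
    [TopologicalSpace R] [ContinuousMul R] [ContinuousStar R] (a : R) :
    Continuous fun u : unitary R ↦ conjStarAlgAut ℂ R u a := by
  simp only [Unitary.conjStarAlgAut_apply]
  fun_prop

theorem integral_conjStarAlgAut_mem_center {R : Type*} [CStarAlgebra R]
    [MeasurableSpace (unitary R)] [MeasurableMul (unitary R)]
    (μ : Measure (unitary R)) [μ.IsMulLeftInvariant] (a : R) :
    ∫ u, conjStarAlgAut ℂ R u a ∂μ ∈ Subalgebra.center ℂ R := by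
  set m := ∫ u, conjStarAlgAut ℂ R u a ∂μ
  have hconj (v : unitary R) : conjStarAlgAut ℂ R v m = m := by
    let conj : R →ₗᵢ[ℂ] R :=
      ⟨(conjStarAlgAut ℂ R v).toAlgEquiv.toLinearMap, StarAlgEquiv.norm_map (conjStarAlgAut ℂ R v)⟩
    calc conjStarAlgAut ℂ R v m
        = ∫ u, conjStarAlgAut ℂ R v (conjStarAlgAut ℂ R u a) ∂μ :=
          (conj.integral_comp_comm _).symm
      _ = ∫ u, conjStarAlgAut ℂ R (v * u) a ∂μ := by
          simp only [Unitary.conjStarAlgAut_mul_apply]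
      _ = m := integral_mul_left_eq_self (fun u ↦ conjStarAlgAut ℂ R u a) v
  have hcomm (v : unitary R) : v * m = m * v := by
    conv_rhs => rw [← hconj v, Unitary.conjStarAlgAut_apply, mul_assoc,
      Unitary.coe_star_mul_self, mul_one]
  have hspan : Submodule.span ℂ (unitary R : Set R) ≤
      Subalgebra.toSubmodule (Subalgebra.centralizer ℂ {m}) :=
    Submodule.span_le.mpr fun v hv ↦
      (Subalgebra.mem_centralizer_iff ℂ).mpr fun _ h ↦ h ▸ (hcomm ⟨v, hv⟩).symm
  rw [CStarAlgebra.span_unitary] at hspan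
  refine Subalgebra.mem_center_iff.mpr fun b ↦ ?_
  have hb : b ∈ Subalgebra.centralizer ℂ {m} := hspan Submodule.mem_top
  exact ((Subalgebra.mem_centralizer_iff ℂ).mp hb m rfl).symm

variable {n : Type*} [Fintype n] [DecidableEq n]

theorem trace_conjStarAlgAut (U : unitaryGroup n ℂ) (A : Matrix n n ℂ) :
    (conjStarAlgAut ℂ (Matrix n n ℂ) U A).trace = A.trace := by
  rw [Unitary.conjStarAlgAut_apply, trace_mul_cycle, Unitary.coe_star_mul_self, one_mul]

theorem integral_trace {Ω : Type*} [MeasurableSpace Ω] {μ : Measure Ω} {f : Ω → Matrix n n ℂ}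
    (hf : Integrable f μ) : ∫ ω, (f ω).trace ∂μ = (∫ ω, f ω ∂μ).trace :=
  (LinearMap.toContinuousLinearMap (traceLinearMap n ℂ ℂ)).integral_comp_comm hf

variable [MeasurableSpace (unitaryGroup n ℂ)] [BorelSpace (unitaryGroup n ℂ)]
    (μ : Measure (unitaryGroup n ℂ)) [IsProbabilityMeasure μ]

theorem memLp_conjStarAlgAut (A : Matrix n n ℂ) (p : ENNReal) :
    MemLp (fun U ↦ conjStarAlgAut ℂ (Matrix n n ℂ) U A) p μ :=
  .of_bound (continuous_conjStarAlgAut A).aestronglyMeasurable ‖A‖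
    (.of_forall fun _ ↦ (StarAlgEquiv.norm_map _ A).le)

theorem integral_conjStarAlgAut [Nonempty n] [μ.IsMulLeftInvariant] (A : Matrix n n ℂ) :
    ∫ U, conjStarAlgAut ℂ (Matrix n n ℂ) U A ∂μ = (A.trace / Fintype.card n) • 1 := by
  obtain ⟨r, hr⟩ : ∃ r : ℂ, algebraMap ℂ _ r = ∫ U, conjStarAlgAut ℂ (Matrix n n ℂ) U A ∂μ := by
    have h := integral_conjStarAlgAut_mem_center μ A
    rwa [Algebra.IsCentral.center_eq_bot, Algebra.mem_bot] at h
  have htrace := integral_trace ((memLp_conjStarAlgAut μ A 1).integrable le_rfl)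
  simp only [trace_conjStarAlgAut, ← hr, Algebra.algebraMap_eq_smul_one, trace_smul,
    trace_one, integral_const, probReal_univ, one_smul] at htrace
  rw [← hr, htrace, smul_eq_mul, mul_div_cancel_right₀ _ (by simp), Algebra.algebraMap_eq_smul_one]

end HaarTwirl

section ConjSum

variable {n ι : Type*} [Fintype n] [DecidableEq n] [Fintype ι]

/-- The superoperator `B ↦ ∑ i, U i * B * (U i)ᴴ`. Its values at `Θ` and `ρ0` are the two factors
of the double sum of cross terms; it is bundled as a linear map so that its value at `ρ0` splits
into those at `1` and `Θ`. -/
def conjSum (U : ι → unitaryGroup n ℂ) : Matrix n n ℂ →ₗ[ℂ] Matrix n n ℂ :=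
  ∑ i, (conjStarAlgAut ℂ (Matrix n n ℂ) (U i)).toAlgEquiv.toLinearMap

theorem conjSum_apply (U : ι → unitaryGroup n ℂ) (B : Matrix n n ℂ) :
    conjSum U B = ∑ i, conjStarAlgAut ℂ (Matrix n n ℂ) (U i) B :=
  LinearMap.sum_apply _ _ _

theorem conjSum_one (U : ι → unitaryGroup n ℂ) : conjSum U 1 = Fintype.card ι • 1 := by
  simp only [conjSum_apply, map_one, Finset.sum_const, Finset.card_univ]

theorem trace_conjSum (U : ι → unitaryGroup n ℂ) (B : Matrix n n ℂ) :
    (conjSum U B).trace = Fintype.card ι • B.trace := by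
  simp only [conjSum_apply, trace_sum, trace_conjStarAlgAut, Finset.sum_const, Finset.card_univ]

theorem isHermitian_conjSum (U : ι → unitaryGroup n ℂ) {B : Matrix n n ℂ} (hB : B.IsHermitian) :
    (conjSum U B).IsHermitian := by
  rw [conjSum_apply]
  exact isSelfAdjoint_sum _ fun i _ ↦ hB.isSelfAdjoint.map (conjStarAlgAut ℂ _ (U i))

theorem sum_sum_trace_mul_conj (U : ι → unitaryGroup n ℂ) (A B : Matrix n n ℂ) :
    ∑ i, ∑ j, (A * (U i : Matrix n n ℂ)ᴴ * (U j : Matrix n n ℂ) * B *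
      (U j : Matrix n n ℂ)ᴴ * (U i : Matrix n n ℂ)).trace = (conjSum U A * conjSum U B).trace := by
  simp only [conjSum_apply, Finset.sum_mul_sum, trace_sum, Unitary.conjStarAlgAut_apply,
    star_eq_conjTranspose]
  refine Finset.sum_congr rfl fun i _ ↦ Finset.sum_congr rfl fun j _ ↦ ?_
  rw [trace_mul_comm]
  simp only [mul_assoc]

theorem trace_conjSum_mul_conjSum_one_add_smul (U : ι → unitaryGroup n ℂ) {A : Matrix n n ℂ}
    (hA : A.trace = 0) (a c : ℂ) :
    (conjSum U A * conjSum U (a • (1 + c • A))).trace = a * c * (conjSum U A ^ 2).trace := by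
  simp only [map_smul, map_add, conjSum_one, mul_smul_comm, mul_add, mul_one, trace_smul,
    trace_add, trace_conjSum, hA, smul_zero, zero_add, smul_eq_mul, sq, mul_assoc]

theorem re_trace_sq_nonneg {A : Matrix n n ℂ} (hA : A.IsHermitian) : 0 ≤ (A ^ 2).trace.re := by
  have h := (posSemidef_conjTranspose_mul_self A).trace_nonneg
  rw [hA.eq, ← sq] at h
  exact (Complex.le_def.mp h).1

variable [MeasurableSpace (unitaryGroup n ℂ)] [BorelSpace (unitaryGroup n ℂ)]
    (μ : Measure (unitaryGroup n ℂ)) [IsProbabilityMeasure μ]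

theorem integrable_conjSum_sq (A : Matrix n n ℂ) :
    Integrable (fun U ↦ conjSum U A ^ 2) (Measure.pi fun _ : ι ↦ μ) := by
  simp only [conjSum_apply]
  exact integrable_pi_sum_eval_sq (X := fun U ↦ conjStarAlgAut ℂ (Matrix n n ℂ) U A)
    (memLp_conjStarAlgAut μ A 2)

theorem integral_trace_conjSum_sq [Nonempty n] [μ.IsMulLeftInvariant] {A : Matrix n n ℂ}
    (hA : A.trace = 0) :
    ∫ U, (conjSum U A ^ 2).trace ∂Measure.pi (fun _ : ι ↦ μ) = Fintype.card ι * (A ^ 2).trace := by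
  have hmean : ∫ U, conjStarAlgAut ℂ (Matrix n n ℂ) U A ∂μ = 0 := by
    rw [integral_conjStarAlgAut, hA, zero_div, zero_smul]
  rw [integral_trace (integrable_conjSum_sq μ A)]
  simp only [conjSum_apply]
  rw [integral_pi_sum_eval_sq (memLp_conjStarAlgAut μ A 2) hmean, trace_smul, nsmul_eq_mul]
  simp only [← map_pow]
  rw [← integral_trace ((memLp_conjStarAlgAut μ (A ^ 2) 1).integrable le_rfl)]
  simp only [trace_conjStarAlgAut, integral_const, probReal_univ, one_smul]

theorem measure_lt_re_trace_conjSum_sq_le [Nonempty n] [μ.IsMulLeftInvariant]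
    {A : Matrix n n ℂ} (hA : A.IsHermitian) (hA0 : A.trace = 0) {t : ℝ} (ht : 0 < t) :
    Measure.pi (fun _ : ι ↦ μ) {U | t < (conjSum U A ^ 2).trace.re} ≤
      ENNReal.ofReal (Fintype.card ι * (A ^ 2).trace.re / t) := by
  have htrace : Integrable (fun U ↦ (conjSum U A ^ 2).trace) (Measure.pi fun _ : ι ↦ μ) :=
    (traceLinearMap n ℂ ℂ).toContinuousLinearMap.integrable_comp (integrable_conjSum_sq μ A)
  have hmean : ∫ U, (conjSum U A ^ 2).trace.re ∂Measure.pi (fun _ : ι ↦ μ) =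
      Fintype.card ι * (A ^ 2).trace.re := by
    rw [← Complex.re_ofReal_mul, Complex.ofReal_natCast, ← integral_trace_conjSum_sq μ hA0]
    exact Complex.reCLM.integral_comp_comm htrace
  rw [← hmean]
  exact measure_lt_le_ofReal_integral_div
    (fun U ↦ re_trace_sq_nonneg (isHermitian_conjSum U hA)) htrace.re ht

theorem prob_cross_term_large_general [Nonempty n] [Nonempty ι] [μ.IsMulLeftInvariant]
    {A : Matrix n n ℂ} (hA : A.IsHermitian) (hA0 : A.trace = 0) {c t : ℝ} (hc : 0 < c)
    (ht : 0 < t) :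
    Measure.pi (fun _ : ι ↦ μ)
        {U | t < ((Fintype.card ι : ℝ) ^ 2)⁻¹ *
          ∑ i, ∑ j, (A * (U i : Matrix n n ℂ)ᴴ * (U j : Matrix n n ℂ) *
            ((Fintype.card n : ℂ)⁻¹ • (1 + (c : ℂ) • A)) *
            (U j : Matrix n n ℂ)ᴴ * (U i : Matrix n n ℂ)).trace.re} ≤
      ENNReal.ofReal (c * (A ^ 2).trace.re / (Fintype.card n * Fintype.card ι * t)) := by
  have hn : 0 < (Fintype.card n : ℝ) := Nat.cast_pos.mpr Fintype.card_pos
  have hι : 0 < (Fintype.card ι : ℝ) := Nat.cast_pos.mpr Fintype.card_pos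
  set s : ℝ := Fintype.card n * Fintype.card ι ^ 2 * t / c with hs
  have hevent (T : ℝ) : t < ((Fintype.card ι : ℝ) ^ 2)⁻¹ * ((Fintype.card n : ℝ)⁻¹ * c * T) ↔
      s < T := by
    rw [hs, div_lt_iff₀ hc, ← div_eq_inv_mul]
    field_simp
  have hbound : Fintype.card ι * (A ^ 2).trace.re / s =
      c * (A ^ 2).trace.re / (Fintype.card n * Fintype.card ι * t) := by
    rw [hs]
    field_simp
  simp only [← Complex.re_sum, sum_sum_trace_mul_conj,
    trace_conjSum_mul_conjSum_one_add_smul _ hA0, ← Complex.ofReal_natCast, ← Complex.ofReal_inv,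
    ← Complex.ofReal_mul, Complex.re_ofReal_mul, hevent, ← hbound]
  exact measure_lt_re_trace_conjSum_sq_le μ hA hA0 (by positivity)

end ConjSum

section Theta

theorem isHermitian_Theta (d : ℕ) : (Theta d).IsHermitian :=
  isHermitian_diagonal_of_self_adjoint _ <| funext fun k ↦ by simp

theorem Theta_sq (d : ℕ) : Theta d ^ 2 = 1 := by
  rw [Theta, diagonal_pow, ← diagonal_one]
  congr 1
  ext k
  simp [← pow_mul]

theorem trace_Theta {d : ℕ} (hd : Even d) : (Theta d).trace = 0 := by
  rw [Theta, trace_diagonal, Fin.sum_univ_eq_sum_range fun k ↦ (-1 : ℂ) ^ (k + 1)]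
  simp [pow_succ, hd]

end Theta

/-- For `U₁, …, U_N` i.i.d. Haar unitaries, the probability that
`(1/N²) Σᵢⱼ Re Tr[Θ Uᵢᴴ Uⱼ ρ0 Uⱼᴴ Uᵢ] > 3ε` is at most `8/(3N)`. -/
theorem prob_cross_term_large (d N : ℕ) (hd : 0 < d) (hdeven : Even d) (hN : 0 < N)
    (ε : ℝ) (hε : 0 < ε) (hε8 : ε ≤ 1 / 8)
    [MeasurableSpace (Matrix.unitaryGroup (Fin d) ℂ)]
    [BorelSpace (Matrix.unitaryGroup (Fin d) ℂ)]
    (μ : Measure (Matrix.unitaryGroup (Fin d) ℂ))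
    [μ.IsHaarMeasure] [IsProbabilityMeasure μ] :
    (Measure.pi fun _ : Fin N => μ)
        {U : Fin N → Matrix.unitaryGroup (Fin d) ℂ |
          3 * ε < ((N : ℝ) ^ 2)⁻¹ *
            ∑ i, ∑ j, ((Theta d * (U i : Matrix (Fin d) (Fin d) ℂ)ᴴ *
              (U j : Matrix (Fin d) (Fin d) ℂ) * rho0 d ε *
              (U j : Matrix (Fin d) (Fin d) ℂ)ᴴ * (U i : Matrix (Fin d) (Fin d) ℂ)).trace).re}
      ≤ 8 / (3 * (N : ENNReal)) := by
  have : NeZero d := ⟨hd.ne'⟩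
  have : NeZero N := ⟨hN.ne'⟩
  have hbound : 8 * ε * d / (d * N * (3 * ε)) = 8 / (3 * (N : ℝ)) := by field_simp
  have h8 : ENNReal.ofReal (8 / (3 * N)) = 8 / (3 * (N : ENNReal)) := by
    rw [ENNReal.ofReal_div_of_pos (mul_pos three_pos (Nat.cast_pos.mpr hN)),
      ENNReal.ofReal_mul (by norm_num)]
    simp
  simpa [rho0, Theta_sq, hbound, h8] using
    prob_cross_term_large_general (ι := Fin N) μ (isHermitian_Theta d) (trace_Theta hdeven)
      (by positivity : 0 < 8 * ε) (by positivity : 0 < 3 * ε)
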